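/- If a differentiated history h is linearizable, then for any linearization ℓ of h and any set S of values, the subsequence of ℓ consisting of the labels whose value lies in S is itself in the sequential stack specification Stack; in particular, the projection h|S is linearizable. -/

import Mathlib

attribute [local instance] Classical.propDecidable

/-- A stack label: `push x`, `pop (some x)`, or `pop none` (= pop(⊥), popping empty). -/
inductive Label where
  | push : ℕ → Label
  | pop  : Option ℕ → Label
  deriving DecidableEq

/-- The value carried by a label (`none` for pop(⊥)). -/
def Label.val : Label → Option ℕ
  | .push x => some x
  | .pop v  => v

/-- The set of values occurring in a sequence of labels. -/
def seqVals (u : List Label) : Set ℕ :=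
  {x | Label.push x ∈ u ∨ Label.pop (some x) ∈ u}

/-- A label sequence is matched if every pushed value is also popped. -/
def seqMatched (u : List Label) : Prop :=
  ∀ x : ℕ, Label.push x ∈ u → Label.pop (some x) ∈ u

/-- The sequential stack specification, as the least set of label sequences closed
under the rules Rε, R_PushPop, R_Push, R_PopEmpty. -/
inductive Stack : List Label → Prop
  | empty : Stack []
  | pushPop (x : ℕ) (u v : List Label) :
      Stack (u ++ v) → Disjoint (seqVals u) (seqVals v) → seqMatched u →
      x ∉ seqVals u → x ∉ seqVals v →
      Stack (Label.push x :: (u ++ Label.pop (some x) :: v))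
  | push (x : ℕ) (u v : List Label) :
      Stack (u ++ v) → Disjoint (seqVals u) (seqVals v) →
      Label.pop none ∉ v → x ∉ seqVals u → x ∉ seqVals v →
      Stack (u ++ Label.push x :: v)
  | popEmpty (u v : List Label) :
      Stack (u ++ v) → seqMatched u →
      Stack (u ++ Label.pop none :: v)

/-- An operation: a label with a call time and a return time, with call < return. -/
structure Op where
  label : Label
  call : ℝ
  ret : ℝ
  call_lt_ret : call < ret

/-- The value of an operation. -/
def Op.val (o : Op) : Option ℕ := o.label.val

/-- A history (finite set of operations) is differentiated: each value is pushed by at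
most one operation and popped by at most one operation. -/
def Differentiated (h : Finset Op) : Prop :=
  (∀ o1 ∈ h, ∀ o2 ∈ h, ∀ x : ℕ,
      o1.label = Label.push x → o2.label = Label.push x → o1 = o2) ∧
  (∀ o1 ∈ h, ∀ o2 ∈ h, ∀ x : ℕ,
      o1.label = Label.pop (some x) → o2.label = Label.pop (some x) → o1 = o2)

/-- The set of values occurring in a history. -/
def hVals (h : Finset Op) : Set ℕ :=
  {x | ∃ o ∈ h, o.label = Label.push x ∨ o.label = Label.pop (some x)}

/-- A history is matched if every pushed value is also popped. -/
def HMatched (h : Finset Op) : Prop :=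
  ∀ x : ℕ, (∃ o ∈ h, o.label = Label.push x) → ∃ o ∈ h, o.label = Label.pop (some x)

/-- A history has no pop(⊥) operations. -/
def NoPopEmpty (h : Finset Op) : Prop :=
  ∀ o ∈ h, o.label ≠ Label.pop none

/-- `ℓ` is a linearization of the history `h`: it lists (the operations of) `h`
exactly once each, respects precedence (`o1` precedes `o2` iff `o1.ret < o2.call`),
and its label sequence is in the sequential stack specification. -/
def IsLinearization (h : Finset Op) (ℓ : List Op) : Prop :=
  ℓ.Nodup ∧ (∀ o : Op, o ∈ ℓ ↔ o ∈ h) ∧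
  ℓ.Pairwise (fun o1 o2 => ¬ o2.ret < o1.call) ∧
  Stack (ℓ.map Op.label)

/-- A history is linearizable if it admits a linearization. -/
def Linearizable (h : Finset Op) : Prop := ∃ ℓ : List Op, IsLinearization h ℓ

/-- Projection of a history onto a set of (possibly-⊥) values. -/
noncomputable def projOpt (h : Finset Op) (V : Set (Option ℕ)) : Finset Op :=
  h.filter (fun o => o.val ∈ V)

/-- Projection of a history onto a set of proper values. -/
noncomputable def projVal (h : Finset Op) (V : Set ℕ) : Finset Op :=
  h.filter (fun o => ∃ x ∈ V, o.val = some x)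

/-- The history with all operations on value `x` removed. -/
noncomputable def removeVal (h : Finset Op) (x : ℕ) : Finset Op :=
  h.filter (fun o => o.val ≠ some x)

/-- A time point is covered if it lies in the I-segment [push(x).ret, pop(x).call]
of some value `x`. -/
def Covered (h : Finset Op) (t : ℝ) : Prop :=
  ∃ p ∈ h, ∃ q ∈ h, ∃ x : ℕ, p.label = Label.push x ∧ q.label = Label.pop (some x) ∧
    p.ret ≤ t ∧ t ≤ q.call

/-- A P-segment: a maximal (nonempty) interval of covered points. -/
def IsPSegment (h : Finset Op) (S : Set ℝ) : Prop :=
  S.Nonempty ∧ S.OrdConnected ∧ (∀ t ∈ S, Covered h t) ∧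
  ∀ T : Set ℝ, S ⊆ T → T.OrdConnected → (∀ t ∈ T, Covered h t) → T = S

/-- A D-segment (opening): a maximal (nonempty) interval of uncovered points. -/
def IsDSegment (h : Finset Op) (S : Set ℝ) : Prop :=
  S.Nonempty ∧ S.OrdConnected ∧ (∀ t ∈ S, ¬ Covered h t) ∧
  ∀ T : Set ℝ, S ⊆ T → T.OrdConnected → (∀ t ∈ T, ¬ Covered h t) → T = S

/-- An inner (internal) D-segment: a D-segment with a P-segment before it and a
P-segment after it. -/
def InnerDSegment (h : Finset Op) (ξ : Set ℝ) : Prop :=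
  IsDSegment h ξ ∧
  (∃ S : Set ℝ, IsPSegment h S ∧ ∀ s ∈ S, ∀ t ∈ ξ, s < t) ∧
  (∃ S : Set ℝ, IsPSegment h S ∧ ∀ s ∈ S, ∀ t ∈ ξ, t < s)

/-- `x` is minimal in `h`: `x` is pushed in `h` and no push of `h` returns before
`push(x)` is called. -/
def MinimalVal (h : Finset Op) (x : ℕ) : Prop :=
  ∃ px ∈ h, px.label = Label.push x ∧
    ∀ p ∈ h, (∃ y : ℕ, p.label = Label.push y) → ¬ p.ret < px.call

/-- `x` is maximal in `h`: `x` is popped in `h` and no pop of `h` is called after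
`pop(x)` returns. -/
def MaximalVal (h : Finset Op) (x : ℕ) : Prop :=
  ∃ qx ∈ h, qx.label = Label.pop (some x) ∧
    ∀ q ∈ h, (∃ v : Option ℕ, q.label = Label.pop v) → ¬ qx.ret < q.call

/-- A separation of the values of `h` into `L` and `R`: a partition such that no
operation on a value of `R` precedes an operation on a value of `L`. -/
def Separation (h : Finset Op) (L R : Set ℕ) : Prop :=
  L ∪ R = hVals h ∧ Disjoint L R ∧
  ∀ o1 ∈ h, ∀ o2 ∈ h, ∀ r ∈ R, ∀ l ∈ L,
    o1.val = some r → o2.val = some l → ¬ o1.ret < o2.call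

/-- Values of `h` whose I-segment lies (entirely) before the D-segment `ξ`. -/
def segL (h : Finset Op) (ξ : Set ℝ) : Set ℕ :=
  {x | ∃ px ∈ h, ∃ qx ∈ h, px.label = Label.push x ∧ qx.label = Label.pop (some x) ∧
    ∀ t ∈ Set.Icc px.ret qx.call, ∀ s ∈ ξ, t < s}

/-- Values of `h` whose I-segment lies (entirely) after the D-segment `ξ`. -/
def segR (h : Finset Op) (ξ : Set ℝ) : Set ℕ :=
  {x | ∃ px ∈ h, ∃ qx ∈ h, px.label = Label.push x ∧ qx.label = Label.pop (some x) ∧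
    ∀ t ∈ Set.Icc px.ret qx.call, ∀ s ∈ ξ, s < t}

theorem seqVals_filter (p : Label → Bool) (u : List Label) :
    seqVals (u.filter p) ⊆ seqVals u := by
  intro x hx
  simp only [seqVals, Set.mem_setOf_eq, List.mem_filter] at *
  tauto

theorem seqMatched_filter (S : Set (Option ℕ)) (u : List Label) (hu : seqMatched u) :
    seqMatched (u.filter (fun lbl => decide (Label.val lbl ∈ S))) := by
  intro x hx
  simp only [List.mem_filter, decide_eq_true_eq, Label.val] at *
  exact ⟨hu x hx.1, hx.2⟩

theorem Stack.proj (S : Set (Option ℕ)) (l : List Label) (hl : Stack l) :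
    Stack (l.filter (fun lbl => decide (Label.val lbl ∈ S))) := by
  induction hl with
  | empty => exact Stack.empty
  | pushPop x u v _ hd hm hu hv ih =>
    rw [List.filter_append] at ih
    by_cases hx : some x ∈ S
    · have := Stack.pushPop x _ _ ih
        (hd.mono (seqVals_filter _ u) (seqVals_filter _ v)) (seqMatched_filter S u hm)
        (fun h => hu (seqVals_filter _ u h)) (fun h => hv (seqVals_filter _ v h))
      simpa [List.filter_cons, Label.val, hx] using this
    · simpa [List.filter_cons, Label.val, hx] using ih
  | push x u v _ hd hn hu hv ih =>
    rw [List.filter_append] at ih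
    by_cases hx : some x ∈ S
    · have := Stack.push x _ _ ih
        (hd.mono (seqVals_filter _ u) (seqVals_filter _ v))
        (fun h => hn (List.mem_filter.1 h).1)
        (fun h => hu (seqVals_filter _ u h)) (fun h => hv (seqVals_filter _ v h))
      simpa [List.filter_cons, Label.val, hx] using this
    · simpa [List.filter_cons, Label.val, hx] using ih
  | popEmpty u v _ hm ih =>
    rw [List.filter_append] at ih
    by_cases hx : none ∈ S
    · have := Stack.popEmpty _ _ ih (seqMatched_filter S u hm)
      simpa [List.filter_cons, Label.val, hx] using this
    · simpa [List.filter_cons, Label.val, hx] using ih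

/-- Projection of a linearization: for any linearization `ℓ` of a differentiated
history `h` and any set `S` of values, the subsequence of labels of `ℓ` with value in
`S` is in `Stack`; in particular the projection `h|S` is linearizable. -/
theorem linearization_projection (h : Finset Op) (hdiff : Differentiated h)
    (ℓ : List Op) (hlin : IsLinearization h ℓ) (S : Set (Option ℕ)) :
    Stack ((ℓ.map Op.label).filter (fun lbl => decide (Label.val lbl ∈ S))) ∧
    Linearizable (projOpt h S) := by
  have hS := Stack.proj S _ hlin.2.2.2
  refine ⟨hS, ℓ.filter (fun o => decide (o.val ∈ S)), hlin.1.filter _, ?_,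
    hlin.2.2.1.filter _, ?_⟩
  · intro o
    simp [projOpt, List.mem_filter, hlin.2.1 o]
  · rw [List.filter_map] at hS
    exact hS
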